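/- arXiv:2604.01880 — 6 statements merged into one kernel-verified Lean document; each statement's English description precedes it below -/
import Mathlib

section
/- For each k, the soft assignment function z ↦ q_k(z) = exp(−‖z − p_k‖²/T) / Σ_{k'} exp(−‖z − p_{k'}‖²/T) is differentiable on E, and its Fréchet derivative at z applied to a direction v ∈ E equals (2/T) · q_k(z) · ⟨p_k − μ(z), v⟩, where μ(z) = Σ_{k'} q_{k'}(z) p_{k'} is the soft centroid at z. -/
/-! The weight `w j z = exp (-‖z - p j‖ ^ 2 / T)` has gradient `(2 / T) * w j z • (p j - z)`. Writing
`S = ∑ j, w j`, the quotient rule gives the gradient of `w k / S` as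
`(2 / T) * (w k / S) • ((p k - z) - ∑ j, (w j / S) • (p j - z))`. Since the weights `w j / S` sum
to `1`, the two copies of `z` cancel and the bracket is `p k - μ z`. -/

open scoped RealInnerProductSpace

theorem hasFDerivAt_gaussian_weight {E : Type*} [NormedAddCommGroup E] [InnerProductSpace ℝ E]
    (c : E) (T : ℝ) (z : E) :
    HasFDerivAt (fun y => Real.exp (-‖y - c‖ ^ 2 / T))
      ((2 / T * Real.exp (-‖z - c‖ ^ 2 / T)) • innerSL ℝ (c - z)) z := by
  have h := (((hasFDerivAt_id (𝕜 := ℝ) z).sub_const c).norm_sq.neg.mul_const T⁻¹).exp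
  simp only [id, ← div_eq_mul_inv] at h
  refine h.congr_fderiv ?_
  ext v
  simp
  ring

/-- For each `k`, the soft assignment map
`z ↦ q k z = exp(−‖z − p k‖²/T) / ∑ k', exp(−‖z − p k'‖²/T)`
is differentiable on `E`, with Fréchet derivative at `z` acting on a
direction `v` as `(2/T) * q k z * ⟪p k − μ z, v⟫`, where
`μ z = ∑ k', q k' z • p k'` is the soft centroid at `z`. -/
theorem soft_assignment_fderiv
    {E : Type*} [NormedAddCommGroup E] [InnerProductSpace ℝ E]
    (K : ℕ) (p : Fin K → E) (T : ℝ) (hT : 0 < T)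
    (q : Fin K → E → ℝ)
    (hq : ∀ k z, q k z =
      Real.exp (-‖z - p k‖ ^ 2 / T) / ∑ k', Real.exp (-‖z - p k'‖ ^ 2 / T))
    (μ : E → E) (hμ : ∀ z, μ z = ∑ k', q k' z • p k') (k : Fin K) (z : E) :
    HasFDerivAt (q k)
      ((2 / T * q k z) • (innerSL ℝ (p k - μ z))) z := by
  have : Nonempty (Fin K) := ⟨k⟩
  set w : Fin K → E → ℝ := fun j y => Real.exp (-‖y - p j‖ ^ 2 / T) with hw
  have hd : ∀ j, HasFDerivAt (w j) ((2 / T * w j z) • innerSL ℝ (p j - z)) z :=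
    fun j => hasFDerivAt_gaussian_weight (p j) T z
  have hS : HasFDerivAt (fun y => ∑ j, w j y)
      (∑ j, (2 / T * w j z) • innerSL ℝ (p j - z)) z :=
    HasFDerivAt.fun_sum fun j _ => hd j
  have hS0 : ∑ j, w j z ≠ 0 :=
    (Finset.sum_pos (fun j _ => Real.exp_pos _) Finset.univ_nonempty).ne'
  have hqw : ∀ j y, q j y = w j y / ∑ i, w i y := hq
  have hqk : q k = fun y => w k y / ∑ j, w j y := funext (hqw k)
  have hμv : ∀ v, inner ℝ (μ z) v = (∑ j, w j z * inner ℝ (p j) v) / ∑ j, w j z := by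
    intro v
    rw [hμ, sum_inner, Finset.sum_div]
    refine Finset.sum_congr rfl fun j _ => ?_
    rw [real_inner_smul_left, hqw, div_mul_eq_mul_div]
  have hSv : ∀ v, (∑ j, (2 / T * w j z) • innerSL ℝ (p j - z)) v =
      2 / T * ((∑ j, w j z * inner ℝ (p j) v) - (∑ j, w j z) * inner ℝ z v) := by
    intro v
    rw [Finset.sum_mul, ← Finset.sum_sub_distrib, Finset.mul_sum, sum_apply]
    refine Finset.sum_congr rfl fun j _ => ?_
    simp only [smul_apply, innerSL_apply_apply, inner_sub_left, smul_eq_mul]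
    ring
  rw [hqw k z, hqk]
  have hdiv := (hd k).fun_mul ((hasDerivAt_inv hS0).comp_hasFDerivAt z hS)
  simp only [Function.comp_apply, ← div_eq_mul_inv] at hdiv
  refine hdiv.congr_fderiv ?_
  ext v
  simp only [smul_apply, add_apply, hSv,
    innerSL_apply_apply, inner_sub_left, smul_eq_mul, hμv]
  field_simp
  ring
end

section
/- Under the token perturbation z_n(ε) = z_n + ε α_n u*, the soft assignment weight q_{nk}(ε) is differentiable in ε and its derivative at ε = 0 equals (2 α_n / T) · q_{nk} · (p_k* − p̄_n*), where p_k* = ⟨p_k, u*⟩ and p̄_n* = Σ_{k'} q_{nk'} p_{k'}* is the soft centroid projection onto u*. -/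
/-! The exponent `-‖z n + ε α n u* - p k‖² / T` has derivative `(2 α n / T) (p_k* - ⟪z n, u*⟫)` at
`ε = 0`. The quotient rule for the softmax replaces the logit derivative by its deviation from the
`q`-weighted mean, so the term `⟪z n, u*⟫`, which does not depend on `k`, cancels. -/

open scoped RealInnerProductSpace

lemma hasDerivAt_gaussian_weight {E : Type*} [NormedAddCommGroup E] [InnerProductSpace ℝ E]
    (z p u : E) (T a : ℝ) :
    HasDerivAt (fun ε : ℝ => Real.exp (-‖(z + (ε * a) • u) - p‖ ^ 2 / T))
      (Real.exp (-‖(z + ((0 : ℝ) * a) • u) - p‖ ^ 2 / T) *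
        (2 * a / T * (⟪p, u⟫ - ⟪z, u⟫))) 0 := by
  have h1 : HasDerivAt (fun ε : ℝ => (z + (ε * a) • u) - p) (a • u) 0 := by
    simpa using ((((hasDerivAt_id (0 : ℝ)).mul_const a).smul_const u).const_add z).sub_const p
  refine (h1.norm_sq.fun_neg.div_const T).exp.congr_deriv ?_
  simp only [zero_mul, zero_smul, add_zero, inner_smul_right, inner_sub_left]
  ring

/-- Under the token perturbation `z n (ε) = z n + ε α n u*`,
the soft assignment weight `q n k (ε)` is differentiable in `ε` with derivative
at `ε = 0` equal to `(2 α n / T) * q n k * (p_k* − p̄_n*)`, where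
`p_k* = ⟪p k, u*⟫` and `p̄_n* = ∑ k', q n k' * p_{k'}*`. -/
theorem soft_assignment_perturbation_deriv
    {E : Type*} [NormedAddCommGroup E] [InnerProductSpace ℝ E]
    (K N : ℕ) (p : Fin K → E) (z : Fin N → E) (T : ℝ) (hT : 0 < T)
    (α : Fin N → ℝ) (uStar : E)
    (qε : Fin N → Fin K → ℝ → ℝ)
    (hqε : ∀ n k ε, qε n k ε =
      Real.exp (-‖(z n + (ε * α n) • uStar) - p k‖ ^ 2 / T) /
        ∑ k', Real.exp (-‖(z n + (ε * α n) • uStar) - p k'‖ ^ 2 / T))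
    (pStar : Fin K → ℝ) (hpStar : ∀ k, pStar k = ⟪p k, uStar⟫)
    (pBar : Fin N → ℝ) (hpBar : ∀ n, pBar n = ∑ k', qε n k' 0 * pStar k')
    (n : Fin N) (k : Fin K) :
    HasDerivAt (qε n k)
      ((2 * α n / T) * qε n k 0 * (pStar k - pBar n)) 0 := by
  have hfun : qε n k = fun ε => Real.exp (-‖(z n + (ε * α n) • uStar) - p k‖ ^ 2 / T) /
      ∑ k', Real.exp (-‖(z n + (ε * α n) • uStar) - p k'‖ ^ 2 / T) := funext (hqε n k)
  have hd := fun j => hasDerivAt_gaussian_weight (z n) (p j) uStar T (α n)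
  have hW : 0 < ∑ k', Real.exp (-‖(z n + ((0 : ℝ) * α n) • uStar) - p k'‖ ^ 2 / T) :=
    Finset.sum_pos (fun _ _ => Real.exp_pos _) ⟨k, Finset.mem_univ k⟩
  rw [hpBar]
  simp only [hqε n _ 0, hpStar]
  rw [hfun]
  refine ((hd k).fun_div (HasDerivAt.fun_sum fun j (_ : j ∈ Finset.univ) => hd j)
    hW.ne').congr_deriv (Eq.symm ?_)
  set w : Fin K → ℝ := fun j => Real.exp (-‖(z n + ((0 : ℝ) * α n) • uStar) - p j‖ ^ 2 / T)
  change 0 < ∑ j, w j at hW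
  change 2 * α n / T * (w k / ∑ j, w j) * (⟪p k, uStar⟫ - ∑ i, w i / (∑ j, w j) * ⟪p i, uStar⟫) =
    (w k * (2 * α n / T * (⟪p k, uStar⟫ - ⟪z n, uStar⟫)) * (∑ j, w j) -
      w k * ∑ i, w i * (2 * α n / T * (⟪p i, uStar⟫ - ⟪z n, uStar⟫))) / (∑ j, w j) ^ 2
  have e1 : ∑ i, w i / (∑ j, w j) * ⟪p i, uStar⟫ = (∑ i, w i * ⟪p i, uStar⟫) / ∑ j, w j := by
    rw [Finset.sum_div]
    exact Finset.sum_congr rfl fun i _ => by ring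
  have e2 : ∑ i, w i * (2 * α n / T * (⟪p i, uStar⟫ - ⟪z n, uStar⟫)) =
      2 * α n / T * ((∑ i, w i * ⟪p i, uStar⟫) - (∑ j, w j) * ⟪z n, uStar⟫) := by
    rw [Finset.sum_mul, ← Finset.sum_sub_distrib, Finset.mul_sum]
    exact Finset.sum_congr rfl fun i _ => by ring
  rw [e1, e2]
  have hW' := hW.ne'
  field_simp
  ring
end

section
/- Under the token perturbation z_n(ε) = z_n + ε α_n u*, the soft centroid projection p̄_n*(ε) = Σ_k q_{nk}(ε) p_k* is differentiable in ε and its derivative at ε = 0 equals (2 α_n / T) · Var_{q_n}[p*], where Var_{q_n}[p*] = Σ_k q_{nk}(p_k*)² − (Σ_k q_{nk} p_k*)² ≥ 0 is the variance of the prototype projections p_k* = ⟨p_k, u*⟩ under the assignment distribution q_n. -/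
/-!
Write `w k` for the unnormalised weight `exp (-‖z + (ε α) u - p k‖² / T)`. Its logarithmic derivative
at `ε = 0` is `(2 α / T) (⟪p k, u⟫ - ⟪z, u⟫)` (`hasDerivAt_softWeight`). The projection is the
quotient `(∑ w P) / (∑ w)` with `P k = ⟪p k, u⟫`, and in the quotient rule the term `⟪z, u⟫`, which does not depend on `k`,
cancels, leaving `(2 α / T) ((∑ w P²) (∑ w) - (∑ w P)²) / (∑ w)²`, which is `2 α / T` times the
variance. Nonnegativity of the variance is the Cauchy–Schwarz inequality with weights `w`.
-/

open scoped RealInnerProductSpace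

lemma hasDerivAt_softWeight {E : Type*} [NormedAddCommGroup E] [InnerProductSpace ℝ E]
    (z p u : E) (a T : ℝ) :
    HasDerivAt (fun ε : ℝ => Real.exp (-‖(z + (ε * a) • u) - p‖ ^ 2 / T))
      (Real.exp (-‖(z + ((0 : ℝ) * a) • u) - p‖ ^ 2 / T) *
        ((2 * a / T) * (⟪p, u⟫ - ⟪z, u⟫))) 0 := by
  have h1 : HasDerivAt (fun ε : ℝ => (z + (ε * a) • u) - p) (a • u) 0 := by
    simpa using ((((hasDerivAt_id (0 : ℝ)).mul_const a).smul_const u).const_add z).sub_const p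
  refine (h1.norm_sq.fun_neg.div_const T).exp.congr_deriv ?_
  simp only [zero_mul, zero_smul, add_zero, inner_sub_left, inner_smul_right]
  ring

/-- Under the token perturbation `z n (ε) = z n + ε α n u*`,
the soft centroid projection `p̄_n*(ε) = ∑ k, q n k (ε) * p_k*` is
differentiable in `ε` with derivative at `ε = 0` equal to
`(2 α n / T) * Var_{q_n}[p*]`, where
`Var_{q_n}[p*] = ∑ k, q n k * (p_k*)² − (∑ k, q n k * p_k*)² ≥ 0`. -/
theorem soft_centroid_projection_deriv
    {E : Type*} [NormedAddCommGroup E] [InnerProductSpace ℝ E]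
    (K N : ℕ) (p : Fin K → E) (z : Fin N → E) (T : ℝ) (hT : 0 < T)
    (α : Fin N → ℝ) (uStar : E)
    (qε : Fin N → Fin K → ℝ → ℝ)
    (hqε : ∀ n k ε, qε n k ε =
      Real.exp (-‖(z n + (ε * α n) • uStar) - p k‖ ^ 2 / T) /
        ∑ k', Real.exp (-‖(z n + (ε * α n) • uStar) - p k'‖ ^ 2 / T))
    (pStar : Fin K → ℝ) (hpStar : ∀ k, pStar k = ⟪p k, uStar⟫)
    (V : Fin N → ℝ)
    (hV : ∀ n, V n = ∑ k, qε n k 0 * (pStar k) ^ 2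
        - (∑ k, qε n k 0 * pStar k) ^ 2)
    (n : Fin N) :
    HasDerivAt (fun ε => ∑ k, qε n k ε * pStar k)
        ((2 * α n / T) * V n) 0
    ∧ 0 ≤ V n := by
  rcases Nat.eq_zero_or_pos K with rfl | hK
  -- Without prototypes every sum is empty, and the normaliser vanishes.
  · have hV0 : V n = 0 := by simp [hV]
    simpa [hV0] using hasDerivAt_const (0 : ℝ) (0 : ℝ)
  have : Nonempty (Fin K) := ⟨⟨0, hK⟩⟩
  set w : Fin K → ℝ → ℝ := fun k ε =>
    Real.exp (-‖(z n + (ε * α n) • uStar) - p k‖ ^ 2 / T)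
  have hwpos : ∀ k ε, 0 < w k ε := fun k ε => Real.exp_pos _
  have hq : ∀ k ε, qε n k ε = w k ε / ∑ k', w k' ε := fun k ε => hqε n k ε
  have hSpos : 0 < ∑ k, w k 0 := Finset.sum_pos (fun k _ => hwpos k 0) Finset.univ_nonempty
  have hS0 := hSpos.ne'
  have hwd : ∀ k, HasDerivAt (w k)
      (w k 0 * ((2 * α n / T) * (pStar k - ⟪z n, uStar⟫))) 0 := fun k => by
    rw [hpStar k]
    exact hasDerivAt_softWeight (z n) (p k) uStar (α n) T
  have hmean : ∀ ε, ∑ k, qε n k ε * pStar k = (∑ k, w k ε * pStar k) / ∑ k, w k ε := by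
    intro ε
    rw [Finset.sum_div]
    exact Finset.sum_congr rfl fun k _ => by rw [hq]; ring
  have hsecond : ∑ k, qε n k 0 * pStar k ^ 2 = (∑ k, w k 0 * pStar k ^ 2) / ∑ k, w k 0 := by
    rw [Finset.sum_div]
    exact Finset.sum_congr rfl fun k _ => by rw [hq]; ring
  have hVn : V n = ((∑ k, w k 0 * pStar k ^ 2) * (∑ k, w k 0) - (∑ k, w k 0 * pStar k) ^ 2)
      / (∑ k, w k 0) ^ 2 := by
    rw [hV, hmean, hsecond]
    field_simp
  have hS : HasDerivAt (fun ε => ∑ k, w k ε)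
      ((2 * α n / T) * (∑ k, w k 0 * pStar k - ⟪z n, uStar⟫ * ∑ k, w k 0)) 0 := by
    refine (HasDerivAt.fun_sum (u := Finset.univ) fun k _ => hwd k).congr_deriv ?_
    rw [Finset.mul_sum, ← Finset.sum_sub_distrib, Finset.mul_sum]
    exact Finset.sum_congr rfl fun k _ => by ring
  have hN : HasDerivAt (fun ε => ∑ k, w k ε * pStar k)
      ((2 * α n / T) * (∑ k, w k 0 * pStar k ^ 2 - ⟪z n, uStar⟫ * ∑ k, w k 0 * pStar k)) 0 := by
    refine (HasDerivAt.fun_sum (u := Finset.univ) fun k _ =>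
      (hwd k).mul_const (pStar k)).congr_deriv ?_
    rw [Finset.mul_sum, ← Finset.sum_sub_distrib, Finset.mul_sum]
    exact Finset.sum_congr rfl fun k _ => by ring
  refine ⟨?_, ?_⟩
  · rw [funext hmean, hVn]
    refine (hN.fun_div hS hS0).congr_deriv ?_
    ring
  · rw [hVn]
    refine div_nonneg (sub_nonneg.2 ?_) (sq_nonneg _)
    exact Finset.sum_sq_le_sum_mul_sum_of_sq_le_mul _
      (fun k _ => mul_nonneg (hwpos k 0).le (sq_nonneg _)) (fun k _ => (hwpos k 0).le)
      (fun k _ => le_of_eq (by ring))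
end

section
/- Under the token perturbation z_n(ε) = z_n + ε α_n u*, the soft assignment weight q_{nk}(ε) is twice differentiable in ε and its second derivative at ε = 0 equals (4 α_n² / T²) · q_{nk} · [ (p_k* − p̄_n*)² − Var_{q_n}[p*] ], where p_k* = ⟨p_k, u*⟩, p̄_n* = Σ_{k'} q_{nk'} p_{k'}*, and Var_{q_n}[p*] = Σ_{k'} q_{nk'}(p_{k'}*)² − (p̄_n*)². -/
/-!
The exponent `-‖z + ε α u* - p_j‖² / T` has derivative `c(ε) + b_j` in `ε`, where
`b_j = 2 α ⟪p_j, u*⟫ / T` is constant in `ε` and `c(ε)` does not depend on `j`. Softmax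
normalization cancels the common rate `c`, so the weights satisfy the autonomous (replicator)
system `q_k' = q_k (b_k - ∑ j, q_j b_j)` (`hasDerivAt_div_sum_of_common_rate`). Differentiating the
right-hand side once more with the same system gives
`q_k'' = q_k ((b_k - b̄)² - Var_q b)`, and `b = (2 α / T) p*` yields the factor `4 α² / T²`.
-/

open scoped RealInnerProductSpace

/-- If positive weights `w j` grow at logarithmic rates `c + b j`, then the normalized weights obey
the replicator equation; the rate `c` shared by all indices drops out. -/
lemma hasDerivAt_div_sum_of_common_rate {ι : Type*} [Fintype ι] (w : ι → ℝ → ℝ) (b : ι → ℝ)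
    (c x : ℝ) (hpos : ∀ j, 0 < w j x)
    (hw : ∀ j, HasDerivAt (w j) (w j x * (c + b j)) x) (k : ι) :
    HasDerivAt (fun y => w k y / ∑ j, w j y)
      (w k x / (∑ j, w j x) * (b k - ∑ j, w j x / (∑ i, w i x) * b j)) x := by
  have hS : (∑ j, w j x) ≠ 0 :=
    (Finset.sum_pos (fun j _ => hpos j) ⟨k, Finset.mem_univ k⟩).ne'
  have hsum : HasDerivAt (fun y => ∑ j, w j y) (∑ j, w j x * (c + b j)) x :=
    HasDerivAt.fun_sum fun j _ => hw j
  refine ((hw k).fun_div hsum hS).congr_deriv ?_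
  have h1 : ∑ j, w j x * (c + b j) = c * ∑ j, w j x + ∑ j, w j x * b j := by
    rw [Finset.mul_sum, ← Finset.sum_add_distrib]
    exact Finset.sum_congr rfl fun j _ => by ring
  have h2 : ∑ j, w j x / (∑ i, w i x) * b j = (∑ j, w j x * b j) / ∑ i, w i x := by
    rw [Finset.sum_div]
    exact Finset.sum_congr rfl fun j _ => by ring
  rw [h1, h2]
  field_simp
  ring

/-- The logarithmic derivative of the unnormalized weight, split into a part independent of
the prototype `p` and a part independent of `ε`. -/
lemma hasDerivAt_exp_neg_norm_sq {E : Type*} [NormedAddCommGroup E] [InnerProductSpace ℝ E]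
    (z p u : E) (T a ε : ℝ) :
    HasDerivAt (fun y : ℝ => Real.exp (-‖(z + (y * a) • u) - p‖ ^ 2 / T))
      (Real.exp (-‖(z + (ε * a) • u) - p‖ ^ 2 / T) *
        (-2 * a / T * ⟪z + (ε * a) • u, u⟫ + 2 * a / T * ⟪p, u⟫)) ε := by
  have h1 : HasDerivAt (fun y : ℝ => (z + (y * a) • u) - p) (a • u) ε := by
    simpa using
      ((((hasDerivAt_id ε).mul_const a).smul_const u).const_add z).sub_const p
  refine (h1.norm_sq.fun_neg.div_const T).exp.congr_deriv ?_
  rw [inner_smul_right, inner_sub_left]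
  ring

/-- Under the token perturbation `z n (ε) = z n + ε α n u*`,
the soft assignment weight `q n k (ε)` is twice differentiable in `ε`, and its
second derivative at `ε = 0` equals
`(4 α n² / T²) * q n k * [ (p_k* − p̄_n*)² − Var_{q_n}[p*] ]`,
where `p_k* = ⟪p k, u*⟫`, `p̄_n* = ∑ k', q n k' * p_{k'}*`, and
`Var_{q_n}[p*] = ∑ k', q n k' * (p_{k'}*)² − (p̄_n*)²`, all evaluated at
`ε = 0`. -/
theorem soft_assignment_second_deriv
    {E : Type*} [NormedAddCommGroup E] [InnerProductSpace ℝ E]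
    (K N : ℕ) (p : Fin K → E) (z : Fin N → E) (T : ℝ) (hT : 0 < T)
    (α : Fin N → ℝ) (uStar : E)
    (qε : Fin N → Fin K → ℝ → ℝ)
    (hqε : ∀ n k ε, qε n k ε =
      Real.exp (-‖(z n + (ε * α n) • uStar) - p k‖ ^ 2 / T) /
        ∑ k', Real.exp (-‖(z n + (ε * α n) • uStar) - p k'‖ ^ 2 / T))
    (pStar : Fin K → ℝ) (hpStar : ∀ k, pStar k = ⟪p k, uStar⟫)
    (pBar : Fin N → ℝ) (hpBar : ∀ n, pBar n = ∑ k', qε n k' 0 * pStar k')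
    (V : Fin N → ℝ)
    (hV : ∀ n, V n = ∑ k', qε n k' 0 * (pStar k') ^ 2 - (pBar n) ^ 2)
    (n : Fin N) (k : Fin K) :
    ∃ q' : ℝ → ℝ,
      (∀ ε, HasDerivAt (qε n k) (q' ε) ε) ∧
      HasDerivAt q'
        ((4 * (α n) ^ 2 / T ^ 2) * qε n k 0 *
          ((pStar k - pBar n) ^ 2 - V n)) 0 := by
  have hq : ∀ j ε, HasDerivAt (qε n j)
      (qε n j ε * (2 * α n / T * pStar j - ∑ i, qε n i ε * (2 * α n / T * pStar i))) ε := by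
    intro j ε
    have h := hasDerivAt_div_sum_of_common_rate
      (fun i y => Real.exp (-‖(z n + (y * α n) • uStar) - p i‖ ^ 2 / T))
      (fun i => 2 * α n / T * pStar i) (-2 * α n / T * ⟪z n + (ε * α n) • uStar, uStar⟫) ε
      (fun i => Real.exp_pos _)
      (fun i => by
        rw [hpStar i]
        exact hasDerivAt_exp_neg_norm_sq (z n) (p i) uStar T (α n) ε) j
    simp only [← hqε] at h
    exact h
  refine ⟨_, hq k, ?_⟩
  have hmean : ∑ i, qε n i 0 * (2 * α n / T * pStar i) = 2 * α n / T * pBar n := by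
    rw [hpBar, Finset.mul_sum]
    exact Finset.sum_congr rfl fun i _ => by ring
  have hsum : HasDerivAt (fun ε => ∑ i, qε n i ε * (2 * α n / T * pStar i))
      (∑ i, qε n i 0 * (2 * α n / T * pStar i - 2 * α n / T * pBar n) *
        (2 * α n / T * pStar i)) 0 :=
    HasDerivAt.fun_sum fun i _ => by
      have h := (hq i 0).mul_const (2 * α n / T * pStar i)
      rwa [hmean] at h
  -- The mean rate changes at a speed equal to the variance of the rates.
  have hvar : ∑ i, qε n i 0 * (2 * α n / T * pStar i - 2 * α n / T * pBar n) *
      (2 * α n / T * pStar i) = (2 * α n / T) ^ 2 * V n := by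
    have h : ∀ i, qε n i 0 * (2 * α n / T * pStar i - 2 * α n / T * pBar n) *
        (2 * α n / T * pStar i) = (2 * α n / T) ^ 2 * (qε n i 0 * pStar i ^ 2) -
          (2 * α n / T) ^ 2 * pBar n * (qε n i 0 * pStar i) := fun i => by ring
    simp only [h]
    rw [Finset.sum_sub_distrib, ← Finset.mul_sum, ← Finset.mul_sum, ← hpBar, hV]
    ring
  rw [hvar] at hsum
  refine ((hq k 0).fun_mul (hsum.const_sub (2 * α n / T * pStar k))).congr_deriv ?_
  rw [hmean]
  ring
end

section
/- Under the token perturbation z_n(ε) = z_n + ε α_n u*, the trace of the aggregated assignment covariance Σ_q(ε) = Σ_n (diag(q_n(ε)) − q_n(ε) q_n(ε)ᵀ) is differentiable in ε and its derivative at ε = 0 equals (2/T) · Σ_{n=1}^N Σ_{k=1}^K q_{nk} (1 − 2 q_{nk}) ⟨p_k − μ_n, u*⟩ α_n, where μ_n = Σ_k q_{nk} p_k is the soft centroid of token n. -/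
/-!
The trace of `diag q − q qᵀ` is the Gini diversity `∑ k, (q k − (q k)²)`, whose derivative along a
curve is `∑ k, (1 − 2 q k) q̇ k`. For a softmax `q` of scores `s`, `q̇ k = q k (ṡ k − ∑ j, q j ṡ j)`
(`hasDerivAt_softmax`): only scores relative to their `q`-mean matter. Here
`ṡ k = -(2/T) α ⟪z − p k, u⟫` (`hasDerivAt_score`), so the contribution of the token `z`, common to
all `k`, cancels upon centring because `∑ k, q k = 1`, and what remains is
`(2/T) α ⟪p k − μ, u⟫` (`score_deriv_sub_mean`).
-/

open Matrix
open scoped RealInnerProductSpace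

theorem hasDerivAt_softmax {ι : Type*} [Fintype ι] (s : ι → ℝ → ℝ) (d q : ι → ℝ) (x : ℝ)
    (hs : ∀ k, HasDerivAt (s k) (d k) x)
    (hq : ∀ k, q k = Real.exp (s k x) / ∑ j, Real.exp (s j x)) (k : ι) :
    HasDerivAt (fun ε => Real.exp (s k ε) / ∑ j, Real.exp (s j ε))
      (q k * (d k - ∑ j, q j * d j)) x := by
  have hpos : 0 < ∑ j, Real.exp (s j x) :=
    Finset.sum_pos (fun j _ => Real.exp_pos _) ⟨k, Finset.mem_univ k⟩
  have hsum : HasDerivAt (fun ε => ∑ j, Real.exp (s j ε)) (∑ j, Real.exp (s j x) * d j) x :=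
    HasDerivAt.fun_sum fun j _ => (hs j).exp
  have hmean : ∑ j, q j * d j = (∑ j, Real.exp (s j x) * d j) / ∑ j, Real.exp (s j x) := by
    rw [Finset.sum_div]
    refine Finset.sum_congr rfl fun j _ => ?_
    rw [hq j]
    ring
  refine ((hs k).exp.fun_div hsum hpos.ne').congr_deriv ?_
  rw [hmean, hq k]
  field_simp

theorem hasDerivAt_score {E : Type*} [NormedAddCommGroup E] [InnerProductSpace ℝ E]
    (z p u : E) (a T : ℝ) :
    HasDerivAt (fun ε : ℝ => -‖(z + (ε * a) • u) - p‖ ^ 2 / T)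
      (-(2 * (a * ⟪z - p, u⟫)) / T) 0 := by
  have h1 : HasDerivAt (fun ε : ℝ => (z + (ε * a) • u) - p) (a • u) 0 := by
    simpa using ((((hasDerivAt_id (0 : ℝ)).mul_const a).smul_const u).const_add z).sub_const p
  simpa [inner_smul_right] using (h1.norm_sq.neg).div_const T

/-- Centring the score derivatives at their `q`-mean replaces the token `z` by the soft centroid. -/
theorem score_deriv_sub_mean {E : Type*} [NormedAddCommGroup E] [InnerProductSpace ℝ E]
    {ι : Type*} [Fintype ι] (z u : E) (p : ι → E) (a T : ℝ) (q : ι → ℝ) (hq : ∑ k, q k = 1)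
    (k : ι) :
    -(2 * (a * ⟪z - p k, u⟫)) / T - ∑ j, q j * (-(2 * (a * ⟪z - p j, u⟫)) / T) =
      2 / T * ⟪p k - ∑ j, q j • p j, u⟫ * a := by
  have h : ∑ j, q j * (-(2 * (a * ⟪z - p j, u⟫)) / T) =
      -(2 * a / T) * (⟪z, u⟫ - ∑ j, q j * ⟪p j, u⟫) := by
    calc _ = -(2 * a / T) * ((∑ j, q j) * ⟪z, u⟫ - ∑ j, q j * ⟪p j, u⟫) := by
          rw [Finset.sum_mul, ← Finset.sum_sub_distrib, Finset.mul_sum]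
          refine Finset.sum_congr rfl fun j _ => ?_
          rw [inner_sub_left]
          ring
      _ = _ := by rw [hq, one_mul]
  rw [h, inner_sub_left, inner_sub_left, sum_inner]
  simp only [real_inner_smul_left]
  ring

/-- Under the token perturbation `z n (ε) = z n + ε α n u*`,
the trace of the aggregated assignment covariance
`Σ_q(ε) = ∑ n, (diag (q n (ε)) − q n (ε) (q n (ε))ᵀ)` is differentiable in
`ε`, with derivative at `ε = 0` equal to
`(2/T) * ∑ n, ∑ k, q n k * (1 − 2 q n k) * ⟪p k − μ n, u*⟫ * α n`,
where `μ n = ∑ k, q n k • p k` is the soft centroid of token `n`. -/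
theorem assignment_covariance_trace_deriv
    {E : Type*} [NormedAddCommGroup E] [InnerProductSpace ℝ E]
    (K N : ℕ) (p : Fin K → E) (z : Fin N → E) (T : ℝ) (hT : 0 < T)
    (α : Fin N → ℝ) (uStar : E)
    (qε : Fin N → Fin K → ℝ → ℝ)
    (hqε : ∀ n k ε, qε n k ε =
      Real.exp (-‖(z n + (ε * α n) • uStar) - p k‖ ^ 2 / T) /
        ∑ k', Real.exp (-‖(z n + (ε * α n) • uStar) - p k'‖ ^ 2 / T))
    (Sq : ℝ → Matrix (Fin K) (Fin K) ℝ)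
    (hSq : ∀ ε, Sq ε = ∑ n, (Matrix.diagonal (fun k => qε n k ε)
        - vecMulVec (fun k => qε n k ε) (fun k => qε n k ε)))
    (μ : Fin N → E) (hμ : ∀ n, μ n = ∑ k, qε n k 0 • p k) :
    HasDerivAt (fun ε => (Sq ε).trace)
      ((2 / T) * ∑ n, ∑ k,
        qε n k 0 * (1 - 2 * qε n k 0) * ⟪p k - μ n, uStar⟫ * α n) 0 := by
  have htr : (fun ε => (Sq ε).trace) = fun ε => ∑ n, ∑ k, (qε n k ε - qε n k ε * qε n k ε) := by
    funext ε
    rw [hSq, Matrix.trace_sum]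
    simp [Matrix.trace, Matrix.vecMulVec_apply]
  have hq : ∀ n k, HasDerivAt (qε n k)
      (qε n k 0 * (2 / T * ⟪p k - μ n, uStar⟫ * α n)) 0 := by
    intro n k
    have hone : ∑ j, qε n j 0 = 1 := by
      simp only [hqε, ← Finset.sum_div]
      -- The index `k` rules out `K = 0`, so the normalizing sum is positive.
      exact div_self (Finset.sum_pos (fun j _ => Real.exp_pos _) ⟨k, Finset.mem_univ k⟩).ne'
    rw [hμ n, ← score_deriv_sub_mean (z n) uStar p (α n) T (fun j => qε n j 0) hone k]
    refine HasDerivAt.congr_of_eventuallyEq ?_ (.of_forall (hqε n k))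
    exact hasDerivAt_softmax _ _ (fun j => qε n j 0) 0
      (fun j => hasDerivAt_score (z n) (p j) uStar (α n) T) (fun j => hqε n j 0) k
  rw [htr]
  refine (HasDerivAt.fun_sum fun n _ => HasDerivAt.fun_sum fun k _ =>
    (hq n k).fun_sub ((hq n k).fun_mul (hq n k))).congr_deriv ?_
  simp only [Finset.mul_sum]
  refine Finset.sum_congr rfl fun n _ => Finset.sum_congr rfl fun k _ => ?_
  ring
end

section
/- Define d_{nk} = ‖z_n − p_k‖², the temperature-dependent assignments q_{nk}(T) = exp(−d_{nk}/T) / Σ_{k'} exp(−d_{nk'}/T), and the soft loss L(T) = Σ_{n=1}^N Σ_{k=1}^K q_{nk}(T) d_{nk}. Then L is differentiable on (0, ∞) and its derivative equals L'(T) = (1/T²) Σ_{n=1}^N Var_{q_n(T)}[d_n], where Var_{q_n(T)}[d_n] = Σ_k q_{nk}(T) d_{nk}² − (Σ_k q_{nk}(T) d_{nk})². In particular L'(T) ≥ 0, so the soft loss is nondecreasing in the temperature. -/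
/-!
For each token the soft loss is a ratio `M / S` of Gibbs sums, with
`S T = ∑ k, exp (-a k / T)` and `M T = ∑ k, exp (-a k / T) * a k`. Differentiating in `T` multiplies
each summand by `a k / T ^ 2`, so the quotient rule yields `1 / T ^ 2` times the variance of `a`
under the Gibbs weights (`hasDerivAt_gibbs_mean`). The variance is nonnegative by Cauchy–Schwarz
(`gibbs_variance_nonneg`). Summing over the tokens gives the result.
-/

lemma hasDerivAt_exp_neg_div (a : ℝ) {T : ℝ} (hT : T ≠ 0) :
    HasDerivAt (fun t => Real.exp (-a / t)) (Real.exp (-a / T) * a / T ^ 2) T := by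
  have h : HasDerivAt (fun t : ℝ => -a / t) (a / T ^ 2) T := by
    simpa [div_eq_mul_inv] using (hasDerivAt_inv hT).const_mul (-a)
  convert h.exp using 1
  ring

/-- The temperature derivative of the Gibbs mean of `a` is its Gibbs variance over `T ^ 2`. -/
lemma hasDerivAt_gibbs_mean {K : ℕ} (a : Fin K → ℝ) {T : ℝ} (hT : T ≠ 0) :
    HasDerivAt (fun t => ∑ k, Real.exp (-a k / t) / (∑ k', Real.exp (-a k' / t)) * a k)
      ((1 / T ^ 2) * (∑ k, Real.exp (-a k / T) / (∑ k', Real.exp (-a k' / T)) * a k ^ 2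
        - (∑ k, Real.exp (-a k / T) / (∑ k', Real.exp (-a k' / T)) * a k) ^ 2)) T := by
  rcases K.eq_zero_or_pos with rfl | hK
  -- With no prototypes the normalizer vanishes, but every outer sum is empty.
  · simpa using hasDerivAt_const T (0 : ℝ)
  have : Nonempty (Fin K) := ⟨⟨0, hK⟩⟩
  have hS : (∑ k, Real.exp (-a k / T)) ≠ 0 :=
    (Finset.sum_pos (fun k _ => Real.exp_pos _) Finset.univ_nonempty).ne'
  have hS' : HasDerivAt (fun t => ∑ k, Real.exp (-a k / t))
      (∑ k, Real.exp (-a k / T) * a k / T ^ 2) T :=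
    HasDerivAt.fun_sum fun k _ => hasDerivAt_exp_neg_div (a k) hT
  have hM' : HasDerivAt (fun t => ∑ k, Real.exp (-a k / t) * a k)
      (∑ k, Real.exp (-a k / T) * a k / T ^ 2 * a k) T :=
    HasDerivAt.fun_sum fun k _ => (hasDerivAt_exp_neg_div (a k) hT).mul_const (a k)
  have hM2 : ∑ k, Real.exp (-a k / T) * a k / T ^ 2 * a k
      = (∑ k, Real.exp (-a k / T) * a k ^ 2) / T ^ 2 := by
    rw [Finset.sum_div]
    exact Finset.sum_congr rfl fun k _ => by ring
  rw [← Finset.sum_div] at hS'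
  rw [hM2] at hM'
  simp only [div_mul_eq_mul_div, ← Finset.sum_div] at hS' hM' ⊢
  refine (hM'.fun_div hS' hS).congr_deriv ?_
  field_simp

/-- The variance of `a` under the Gibbs weights is nonnegative; this is the Cauchy–Schwarz
inequality `(∑ w a) ^ 2 ≤ (∑ w) (∑ w a ^ 2)` for `w k = exp (-a k / T)`. -/
lemma gibbs_variance_nonneg {K : ℕ} (a : Fin K → ℝ) (T : ℝ) :
    0 ≤ ∑ k, Real.exp (-a k / T) / (∑ k', Real.exp (-a k' / T)) * a k ^ 2
        - (∑ k, Real.exp (-a k / T) / (∑ k', Real.exp (-a k' / T)) * a k) ^ 2 := by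
  rcases K.eq_zero_or_pos with rfl | hK
  · simp
  have : Nonempty (Fin K) := ⟨⟨0, hK⟩⟩
  have hS : 0 < ∑ k, Real.exp (-a k / T) :=
    Finset.sum_pos (fun k _ => Real.exp_pos _) Finset.univ_nonempty
  have hCS : (∑ k, Real.exp (-a k / T) * a k) ^ 2
      ≤ (∑ k, Real.exp (-a k / T)) * ∑ k, Real.exp (-a k / T) * a k ^ 2 :=
    Finset.sum_sq_le_sum_mul_sum_of_sq_le_mul _ (fun k _ => (Real.exp_pos _).le)
      (fun k _ => by positivity) (fun k _ => le_of_eq (by ring))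
  simp only [div_mul_eq_mul_div, ← Finset.sum_div]
  rw [sub_nonneg, div_pow, div_le_div_iff₀ (by positivity) hS]
  nlinarith [mul_le_mul_of_nonneg_right hCS hS.le]

/-- With `d n k = ‖z n − p k‖²`, temperature-dependent
assignments `q n k T = exp(−d n k / T) / ∑ k', exp(−d n k' / T)` and soft loss
`L T = ∑ n, ∑ k, q n k T * d n k`, the loss `L` is differentiable at every
`T > 0` with derivative `(1/T²) ∑ n, Var_{q n T}[d n]`, where
`Var_{q n T}[d n] = ∑ k, q n k T * (d n k)² − (∑ k, q n k T * d n k)²`.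
In particular `L' T ≥ 0`: the soft loss is nondecreasing in the temperature. -/
theorem soft_loss_temperature_deriv
    {E : Type*} [NormedAddCommGroup E] [InnerProductSpace ℝ E]
    (K N : ℕ) (p : Fin K → E) (z : Fin N → E)
    (d : Fin N → Fin K → ℝ) (hd : ∀ n k, d n k = ‖z n - p k‖ ^ 2)
    (q : Fin N → Fin K → ℝ → ℝ)
    (hq : ∀ n k T, q n k T =
      Real.exp (-d n k / T) / ∑ k', Real.exp (-d n k' / T))
    (L : ℝ → ℝ) (hL : ∀ T, L T = ∑ n, ∑ k, q n k T * d n k)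
    (T : ℝ) (hT : 0 < T) :
    HasDerivAt L
      ((1 / T ^ 2) * ∑ n,
        (∑ k, q n k T * (d n k) ^ 2 - (∑ k, q n k T * d n k) ^ 2)) T
    ∧ 0 ≤ (1 / T ^ 2) * ∑ n,
        (∑ k, q n k T * (d n k) ^ 2 - (∑ k, q n k T * d n k) ^ 2) := by
  obtain rfl : L = fun t => ∑ n, ∑ k, q n k t * d n k := funext hL
  simp only [hq]
  constructor
  · rw [Finset.mul_sum]
    exact HasDerivAt.fun_sum fun n _ => hasDerivAt_gibbs_mean (d n) hT.ne'
  · exact mul_nonneg (by positivity) (Finset.sum_nonneg fun n _ => gibbs_variance_nonneg (d n) T)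
end
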